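/- arXiv:2108.01566 — 2 statements merged into one kernel-verified Lean document; each statement's English description precedes it below -/
import Mathlib

section
/- Let (A, t) be a C_k-algebra with 0 ≠ 1. Then the following are equivalent: (i) (A, t) is simple, i.e., the only c-filters of A are {1} and A; (ii) for every a ∈ A with a ≠ 1, ⋀_{j=1}^{k} t^j(△a) = 0; (iii) K(A) = {0, 1}, where K(A) = {x ∈ A : t(x) = x and ∇x = x}. -/
universe u

/-- Modal pseudocomplemented De Morgan algebra (mpM-algebra). -/
class MpM (A : Type u) extends DistribLattice A, BoundedOrder A where
  dm : A → A   -- De Morgan negation ∼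
  ps : A → A   -- pseudocomplement *
  dm_dm : ∀ x : A, dm (dm x) = x
  dm_sup : ∀ x y : A, dm (x ⊔ y) = dm x ⊓ dm y
  pseudo : ∀ a x : A, a ⊓ x = ⊥ ↔ x ≤ ps a
  modal : ∀ x : A, x ⊔ dm x ≤ x ⊔ ps x

open MpM

variable {A : Type u} [MpM A]

/-- ∇x = ∼(∼x ∧ x*) -/
def nabla (x : A) : A := dm (dm x ⊓ ps x)

/-- △x = ∼∇∼x -/
def tri (x : A) : A := dm (nabla (dm x))

/-- A C_k-algebra structure on an mpM-algebra `A`: an automorphism `t` with `t^k = id`. -/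
structure CkStr (A : Type u) [MpM A] (k : ℕ) where
  t : A → A
  bij : Function.Bijective t
  map_inf : ∀ x y : A, t (x ⊓ y) = t x ⊓ t y
  map_sup : ∀ x y : A, t (x ⊔ y) = t x ⊔ t y
  map_dm : ∀ x : A, t (dm x) = dm (t x)
  map_ps : ∀ x : A, t (ps x) = ps (t x)
  map_bot : t (⊥ : A) = ⊥
  map_top : t (⊤ : A) = ⊤
  periodic : ∀ x : A, t^[k] x = x

/-- Lattice filter: nonempty, upward closed, closed under binary meets. -/
def IsLatFilter (F : Set A) : Prop :=
  F.Nonempty ∧ (∀ x ∈ F, ∀ y : A, x ≤ y → y ∈ F) ∧ ∀ x ∈ F, ∀ y ∈ F, x ⊓ y ∈ F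

/-- c-filter: a filter closed under △ and t. -/
def IsCFilter {k : ℕ} (T : CkStr A k) (F : Set A) : Prop :=
  IsLatFilter F ∧ ∀ x ∈ F, tri x ∈ F ∧ T.t x ∈ F

/-- maximal c-filter: proper and not properly contained in a proper c-filter. -/
def IsMaxCFilter {k : ℕ} (T : CkStr A k) (N : Set A) : Prop :=
  IsCFilter T N ∧ N ≠ Set.univ ∧
    ∀ G : Set A, IsCFilter T G → G ≠ Set.univ → N ⊆ G → N = G

/-- prime filter -/
def IsPrimeFilter (P : Set A) : Prop :=
  IsLatFilter P ∧ P ≠ Set.univ ∧ ∀ x y : A, x ⊔ y ∈ P → x ∈ P ∨ y ∈ P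

/-- ultrafilter: maximal proper (lattice) filter -/
def IsUltraFilter (U : Set A) : Prop :=
  IsLatFilter U ∧ U ≠ Set.univ ∧
    ∀ G : Set A, IsLatFilter G → G ≠ Set.univ → U ⊆ G → U = G

/-- Birula–Rasiowa transformation φ(P) = A \ {∼x : x ∈ P}. -/
def brPhi (P : Set A) : Set A := Set.univ \ (dm '' P)

/-- a ⇁ b = (⋁_{i=1}^{k} ∇(∼ t^i(a))) ∨ b -/
def rimp {k : ℕ} (T : CkStr A k) (a b : A) : A :=
  ((Finset.Icc 1 k).sup fun i => nabla (dm (T.t^[i] a))) ⊔ b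

/-- cyclic deductive system -/
def IsCDS {k : ℕ} (T : CkStr A k) (D : Set A) : Prop :=
  (⊤ : A) ∈ D ∧ ∀ x ∈ D, ∀ y : A, rimp T x y ∈ D → y ∈ D

/-- maximal cyclic deductive system -/
def IsMaxCDS {k : ℕ} (T : CkStr A k) (M : Set A) : Prop :=
  IsCDS T M ∧ M ≠ Set.univ ∧
    ∀ G : Set A, IsCDS T G → G ≠ Set.univ → M ⊆ G → M = G

/-- the smallest cyclic deductive system containing `X` -/
def genCDS {k : ℕ} (T : CkStr A k) (X : Set A) : Set A :=
  ⋂₀ {D : Set A | IsCDS T D ∧ X ⊆ D}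

/-- K(A) = {x : t(x) = x and ∇x = x} -/
def Kset {k : ℕ} (T : CkStr A k) : Set A := {x : A | T.t x = x ∧ nabla x = x}

/-- consistency operator ∘x = ⋀_{i=0}^{k} t^i((∼x ∨ x) ∧ (x ∧ ∼x)*) -/
def cCirc {k : ℕ} (T : CkStr A k) (x : A) : A :=
  (Finset.Icc 0 k).inf fun i => T.t^[i] ((dm x ⊔ x) ⊓ ps (x ⊓ dm x))

/-- x → y = ∼((∼(x∨y))* ∧ (x∨y)) ∨ ((∼(x∧y))* ∧ (x∧y)) -/
def mpTo (x y : A) : A :=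
  dm (ps (dm (x ⊔ y)) ⊓ (x ⊔ y)) ⊔ (ps (dm (x ⊓ y)) ⊓ (x ⊓ y))

/-- x ⇒ y = (x → y) ∧ (∼y → ∼x) -/
def mpIff (x y : A) : A := mpTo x y ⊓ mpTo (dm y) (dm x)

/-!
The meet over `j` of `t^j (△a)` lies in `K(A)`, lies below `a`, and belongs to every c-filter
containing `a`. It lies in `K(A)` because `△a` is Boolean by the modal axiom, Boolean elements are
closed under finite meets and automorphisms, and the meet over a full cycle of `t` is fixed by `t`.
Conversely, the up-set of an element of `K(A)` is a c-filter.
-/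

namespace MpM

variable {x y : A}

theorem dm_antitone : Antitone (dm : A → A) := fun x y h =>
  inf_eq_left.1 (by rw [← dm_sup, sup_eq_left.2 h])

theorem dm_inf (x y : A) : dm (x ⊓ y) = dm x ⊔ dm y := by
  rw [← dm_dm (dm x ⊔ dm y), dm_sup, dm_dm, dm_dm]

theorem dm_top : dm (⊤ : A) = ⊥ :=
  le_bot_iff.1 <| (dm_antitone (le_top : dm (⊥ : A) ≤ ⊤)).trans_eq (dm_dm ⊥)

theorem le_ps_iff_disjoint : y ≤ ps x ↔ Disjoint x y := by
  rw [disjoint_iff, pseudo]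

theorem disjoint_ps (x : A) : Disjoint x (ps x) :=
  le_ps_iff_disjoint.1 le_rfl

theorem dm_inf_dm_ps_le (x : A) : dm x ⊓ dm (ps x) ≤ x := by
  simpa only [dm_sup, dm_dm] using dm_antitone (le_sup_right.trans (modal x))

end MpM

theorem tri_eq_inf_ps_dm (x : A) : tri x = x ⊓ ps (dm x) := by
  rw [tri, nabla, dm_dm, dm_dm]

theorem tri_le_self (x : A) : tri x ≤ x :=
  (tri_eq_inf_ps_dm x).trans_le inf_le_left

/-- A Boolean element of an mpM-algebra. The condition `x ∧ ∼x = 0` suffices to make `∼x` a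
complement of `x`, since applying `∼` to it gives `x ∨ ∼x = 1`. -/
def IsBoolean (x : A) : Prop := Disjoint x (dm x)

theorem nabla_eq_self_iff {x : A} : nabla x = x ↔ IsBoolean x := by
  have involutive : Function.Involutive (dm : A → A) := dm_dm
  rw [nabla, involutive.eq_iff, inf_eq_left, le_ps_iff_disjoint, IsBoolean]

theorem isBoolean_tri (x : A) : IsBoolean (tri x) := by
  have disjoint_dm : Disjoint (x ⊓ ps (dm x)) (dm x) :=
    (disjoint_ps (dm x)).symm.mono_left inf_le_right
  have modal_dm : x ⊓ dm (ps (dm x)) ≤ dm x := by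
    simpa only [dm_dm] using dm_inf_dm_ps_le (dm x)
  have disjoint_dm_ps : Disjoint (x ⊓ ps (dm x)) (dm (ps (dm x))) := by
    rw [disjoint_iff, inf_right_comm, ← disjoint_iff]
    exact (disjoint_ps (dm x)).mono_left modal_dm
  rw [IsBoolean, tri_eq_inf_ps_dm, dm_inf]
  exact disjoint_sup_right.2 ⟨disjoint_dm, disjoint_dm_ps⟩

namespace IsBoolean

variable {x y : A}

theorem bot : IsBoolean (⊥ : A) := disjoint_bot_left

theorem top : IsBoolean (⊤ : A) := top_disjoint.2 dm_top

theorem inf (hx : IsBoolean x) (hy : IsBoolean y) : IsBoolean (x ⊓ y) := by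
  rw [IsBoolean, dm_inf]
  exact disjoint_sup_right.2 ⟨hx.mono_left inf_le_left, hy.mono_left inf_le_right⟩

theorem finset_inf {ι : Type*} {s : Finset ι} {f : ι → A} (hf : ∀ i ∈ s, IsBoolean (f i)) :
    IsBoolean (s.inf f) :=
  Finset.inf_induction top (fun _ hx _ hy => hx.inf hy) hf

theorem le_tri (hx : IsBoolean x) (h : x ≤ y) : x ≤ tri y := by
  rw [tri_eq_inf_ps_dm]
  exact le_inf h (le_ps_iff_disjoint.2 (hx.mono_right (dm_antitone h)).symm)

theorem map {k : ℕ} (T : CkStr A k) (hx : IsBoolean x) : IsBoolean (T.t x) := by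
  rw [IsBoolean, disjoint_iff, ← T.map_dm, ← T.map_inf, hx.eq_bot, T.map_bot]

theorem iterate {k : ℕ} (T : CkStr A k) (hx : IsBoolean x) (n : ℕ) : IsBoolean (T.t^[n] x) :=
  Function.Iterate.rec IsBoolean hx (fun _ => map T) n

end IsBoolean

namespace CkStr

variable {k : ℕ} (T : CkStr A k)

theorem monotone_t : Monotone T.t := Monotone.of_map_inf T.map_inf

theorem t_eq_self_of_le (hk : 0 < k) {x : A} (h : x ≤ T.t x) : T.t x = x := by
  have t_le_iterate : T.t x ≤ T.t^[k] x := T.monotone_t.monotone_iterate_of_le_map h hk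
  exact (t_le_iterate.trans_eq (T.periodic x)).antisymm h

/-- The meet `⋀_{j=1}^{k} t^j(x)` over a full cycle of `t`. For `k > 0` it is the greatest
`t`-fixed element below `x`; for `k = 0` it is the empty meet `⊤`. -/
def cycleInf (x : A) : A := (Finset.Icc 1 k).inf fun j => T.t^[j] x

theorem cycleInf_le_self (hk : 0 < k) (x : A) : T.cycleInf x ≤ x :=
  (Finset.inf_le (Finset.right_mem_Icc.2 hk)).trans_eq (T.periodic x)

theorem cycleInf_le_t_cycleInf (x : A) : T.cycleInf x ≤ T.t (T.cycleInf x) := by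
  rw [cycleInf, Finset.apply_inf_eq_inf_comp T.t T.map_inf T.map_top]
  refine Finset.le_inf fun j hj => ?_
  obtain ⟨one_le, le_k⟩ := Finset.mem_Icc.1 hj
  rw [Function.comp_apply]
  obtain rfl | lt_k := le_k.eq_or_lt
  · rw [T.periodic]
    exact Finset.inf_le (Finset.left_mem_Icc.2 one_le)
  · rw [← Function.iterate_succ_apply' T.t]
    exact Finset.inf_le (Finset.mem_Icc.2 ⟨j.succ_pos, lt_k⟩)

theorem t_cycleInf (x : A) : T.t (T.cycleInf x) = T.cycleInf x := by
  obtain rfl | hk := k.eq_zero_or_pos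
  · exact T.map_top
  · exact T.t_eq_self_of_le hk (T.cycleInf_le_t_cycleInf x)

theorem mem_Kset_iff {x : A} : x ∈ Kset T ↔ T.t x = x ∧ IsBoolean x :=
  and_congr_right fun _ => nabla_eq_self_iff

theorem cycleInf_tri_mem_Kset (a : A) : T.cycleInf (tri a) ∈ Kset T :=
  T.mem_Kset_iff.2
    ⟨T.t_cycleInf _, IsBoolean.finset_inf fun j _ => (isBoolean_tri a).iterate T j⟩

theorem Kset_eq_pair_iff : Kset T = {⊥, ⊤} ↔ ∀ b ∈ Kset T, b = ⊥ ∨ b = ⊤ := by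
  refine ⟨fun h b hb => by rwa [h] at hb, fun h => Set.Subset.antisymm h ?_⟩
  rintro b (rfl | rfl)
  · exact T.mem_Kset_iff.2 ⟨T.map_bot, IsBoolean.bot⟩
  · exact T.mem_Kset_iff.2 ⟨T.map_top, IsBoolean.top⟩

theorem isCFilter_Ici {b : A} (hb : b ∈ Kset T) : IsCFilter T (Set.Ici b) := by
  obtain ⟨t_eq, boolean⟩ := T.mem_Kset_iff.1 hb
  exact ⟨⟨Set.nonempty_Ici, fun x hx y hxy => le_trans hx hxy, fun x hx y hy => le_inf hx hy⟩,
    fun x hx => ⟨boolean.le_tri hx, t_eq.ge.trans (T.monotone_t hx)⟩⟩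

end CkStr

namespace IsLatFilter

variable {F : Set A}

theorem top_mem (hF : IsLatFilter F) : ⊤ ∈ F :=
  let ⟨⟨x, hx⟩, upward, _⟩ := hF
  upward x hx ⊤ le_top

theorem finset_inf_mem (hF : IsLatFilter F) {ι : Type*} {s : Finset ι} {f : ι → A}
    (hf : ∀ i ∈ s, f i ∈ F) : s.inf f ∈ F :=
  Finset.inf_induction hF.top_mem hF.2.2 hf

theorem eq_univ_of_bot_mem (hF : IsLatFilter F) (h : ⊥ ∈ F) : F = Set.univ :=
  Set.eq_univ_of_forall fun x => hF.2.1 ⊥ h x bot_le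

end IsLatFilter

theorem IsCFilter.cycleInf_tri_mem {k : ℕ} {T : CkStr A k} {F : Set A} (hF : IsCFilter T F)
    {a : A} (ha : a ∈ F) : T.cycleInf (tri a) ∈ F :=
  hF.1.finset_inf_mem fun j _ =>
    Function.Iterate.rec (· ∈ F) (hF.2 a ha).1 (fun x hx => (hF.2 x hx).2) j

theorem stmt14 {k : ℕ} (hk : 0 < k) (T : CkStr A k) (hnt : (⊥ : A) ≠ ⊤) :
    List.TFAE
      [ ∀ F : Set A, IsCFilter T F → F = {(⊤ : A)} ∨ F = Set.univ,
        ∀ a : A, a ≠ ⊤ → ((Finset.Icc 1 k).inf fun j => T.t^[j] (tri a)) = ⊥,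
        Kset T = {(⊥ : A), ⊤} ] := by
  tfae_have 1 → 3 := by
    refine fun simple => T.Kset_eq_pair_iff.2 fun b hb => ?_
    obtain Ici_eq | Ici_eq := simple (Set.Ici b) (T.isCFilter_Ici hb)
    · exact .inr (Set.Ici_injective (Ici_eq.trans Set.Ici_top.symm))
    · exact .inl (Set.Ici_injective (Ici_eq.trans Set.Ici_bot.symm))
  tfae_have 3 → 2 := by
    intro hK a ha
    refine (T.Kset_eq_pair_iff.1 hK _ (T.cycleInf_tri_mem_Kset a)).resolve_right fun eq_top => ha ?_
    exact top_le_iff.1 <| eq_top.ge.trans <| (T.cycleInf_le_self hk _).trans (tri_le_self a)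
  tfae_have 2 → 1 := by
    intro h F hF
    refine or_iff_not_imp_left.2 fun hne => hF.1.eq_univ_of_bot_mem ?_
    obtain ⟨a, haF, ha⟩ : ∃ a ∈ F, a ≠ ⊤ := by
      by_contra! all_top
      exact hne (Set.eq_singleton_iff_unique_mem.2 ⟨hF.1.top_mem, all_top⟩)
    exact h a ha ▸ hF.cycleInf_tri_mem haF
  tfae_finish
end

section
/- Let (A, t) be a C_k-algebra and let B(A) = {x ∈ A : x ∧ ∼x = 0} be its set of Boolean elements. Then for every x ∈ A: x ∈ B(A) if and only if ∘x = 1. -/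
universe u

open MpM

variable {A : Type u} [MpM A]

/-! By the De Morgan laws `x ∧ ∼x = 0` is equivalent to `∼x ∨ x = 1`, and a pseudocomplement `a*`
equals `1` exactly when `a = 0`. So both factors of `(∼x ∨ x) ∧ (x ∧ ∼x)*` are `1` under the very
same condition `x ∧ ∼x = 0`. The meet over the iterates of `t` adds nothing, because its `i = 0`
term is this element itself and `t` fixes `1`. -/

section DeMorgan

variable {α : Type*} [Lattice α] [BoundedOrder α] {neg : α → α}

theorem map_top_eq_bot_of_deMorgan (neg_neg : Function.Involutive neg)
    (neg_sup : ∀ a b, neg (a ⊔ b) = neg a ⊓ neg b) : neg ⊤ = ⊥ :=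
  calc
    neg ⊤ = neg (⊤ ⊔ neg ⊥) := by rw [top_sup_eq]
    _ = neg ⊤ ⊓ neg (neg ⊥) := neg_sup _ _
    _ = ⊥ := by rw [neg_neg, inf_bot_eq]

theorem inf_map_self_eq_bot_iff_of_deMorgan (neg_neg : Function.Involutive neg)
    (neg_sup : ∀ a b, neg (a ⊔ b) = neg a ⊓ neg b) (x : α) :
    x ⊓ neg x = ⊥ ↔ neg x ⊔ x = ⊤ :=
  calc
    x ⊓ neg x = ⊥ ↔ neg (neg x ⊔ x) = ⊥ := by rw [neg_sup, neg_neg]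
    _ ↔ neg (neg x ⊔ x) = neg ⊤ := by rw [map_top_eq_bot_of_deMorgan neg_neg neg_sup]
    _ ↔ neg x ⊔ x = ⊤ := neg_neg.injective.eq_iff

end DeMorgan

theorem pseudocomplement_eq_top_iff {α : Type*} [SemilatticeInf α] [BoundedOrder α] {a p : α}
    (hp : ∀ x, a ⊓ x = ⊥ ↔ x ≤ p) : p = ⊤ ↔ a = ⊥ := by
  rw [← top_le_iff, ← hp, inf_top_eq]

theorem finset_inf_iterate_eq_top_iff {α : Type*} [SemilatticeInf α] [OrderTop α] {f : α → α}
    (map_top : f ⊤ = ⊤) {s : Finset ℕ} (zero_mem : 0 ∈ s) (a : α) :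
    (s.inf fun i => f^[i] a) = ⊤ ↔ a = ⊤ := by
  rw [Finset.inf_eq_top_iff]
  constructor
  · intro iterates_eq_top
    exact iterates_eq_top 0 zero_mem
  · rintro rfl i -
    exact Function.iterate_fixed map_top i

theorem stmt17_general {α : Type*} [Lattice α] [BoundedOrder α] {neg pc t : α → α}
    (neg_neg : Function.Involutive neg) (neg_sup : ∀ a b, neg (a ⊔ b) = neg a ⊓ neg b)
    (inf_eq_bot_iff_le_pc : ∀ a x, a ⊓ x = ⊥ ↔ x ≤ pc a) (map_top : t ⊤ = ⊤) (k : ℕ) (x : α) :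
    x ⊓ neg x = ⊥ ↔
      ((Finset.Icc 0 k).inf fun i => t^[i] ((neg x ⊔ x) ⊓ pc (x ⊓ neg x))) = ⊤ := by
  have zero_mem : 0 ∈ Finset.Icc 0 k := Finset.left_mem_Icc.mpr k.zero_le
  rw [finset_inf_iterate_eq_top_iff map_top zero_mem, inf_eq_top_iff,
    pseudocomplement_eq_top_iff (inf_eq_bot_iff_le_pc _),
    ← inf_map_self_eq_bot_iff_of_deMorgan neg_neg neg_sup, and_self]

theorem stmt17 {k : ℕ} (hk : 0 < k) (T : CkStr A k) (x : A) :
    x ⊓ dm x = ⊥ ↔ cCirc T x = ⊤ :=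
  stmt17_general dm_dm dm_sup pseudo T.map_top k x
end
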